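/- Let K be a d-dimensional maximal lattice-free set in ℝ^d. Then K is a polyhedron and the relative interior of every facet of K contains at least one point of ℤ^d. -/

import Mathlib

open Pointwise

/-- The standard integer lattice `ℤ^d` viewed as a subset of `ℝ^d`. -/
def intLattice (d : ℕ) : Set (Fin d → ℝ) :=
  Set.range (fun z : Fin d → ℤ => fun i => (z i : ℝ))

/-- A set `K ⊆ ℝ^d` is lattice-free if it is closed, convex, and its interior
contains no point of `ℤ^d`. -/
def IsLatticeFree (d : ℕ) (K : Set (Fin d → ℝ)) : Prop :=
  IsClosed K ∧ Convex ℝ K ∧ interior K ∩ intLattice d = ∅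

/-- A lattice-free set is maximal if it is not properly contained in another
lattice-free set. -/
def IsMaxLatticeFree (d : ℕ) (K : Set (Fin d → ℝ)) : Prop :=
  IsLatticeFree d K ∧ ∀ K' : Set (Fin d → ℝ), IsLatticeFree d K' → K ⊆ K' → K' = K

/-- The recession cone of `K`: all vectors `u` with `K + u ⊆ K`. -/
def recCone (d : ℕ) (K : Set (Fin d → ℝ)) : Set (Fin d → ℝ) :=
  {u | ∀ x ∈ K, x + u ∈ K}

/-- A polyhedron: an intersection of finitely many closed halfspaces. -/
def IsPolyhedron (d : ℕ) (K : Set (Fin d → ℝ)) : Prop :=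
  ∃ (n : ℕ) (a : Fin n → (Fin d → ℝ)) (b : Fin n → ℝ),
    K = {x | ∀ i, ∑ j, a i j * x j ≤ b i}

/-- A polytope: the convex hull of finitely many points. -/
def IsPolytope (d : ℕ) (K : Set (Fin d → ℝ)) : Prop :=
  ∃ s : Finset (Fin d → ℝ), K = convexHull ℝ (s : Set (Fin d → ℝ))

/-- A facet of a `d`-dimensional convex set `K ⊆ ℝ^d`: a nonempty convex
(extreme) face of dimension `d - 1`. -/
def IsFacet (d : ℕ) (K F : Set (Fin d → ℝ)) : Prop :=
  F.Nonempty ∧ IsExtreme ℝ K F ∧ Convex ℝ F ∧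
    Module.finrank ℝ (affineSpan ℝ F).direction + 1 = d

/-!
Let `Λ` be a subgroup spanning a finite-dimensional space and `K` a maximal convex set with no point
of `Λ` in its interior. If every multiple of `v` is a limit of differences of elements of `Λ` and
recession directions of `K`, then the closure of `interior K + ℝ v` is still free, so by maximality
`K` is invariant under translation by `ℝ v`. Dirichlet approximation shows that recession directions
have this property, and so has some line whenever `Λ` is not discrete. Hence after dividing by the
lineality space `K` is bounded and `Λ` is discrete. Then only finitely many points of `Λ` lie in a
box around `K`; separating each of them from `K` gives a free polyhedron containing `K`, hence equal
to `K`.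

For a facet `F`, push outwards the inequalities that are tight at a relative interior point of `F`.
By maximality the relaxed polyhedron contains a point `z` of `Λ` in its interior, and if the push is
small enough, `z` lies in `K`. As `z` is not interior to `K`, it satisfies one of the relaxed
inequalities with equality, which puts it in the affine span of `F`; the others are strict near `z`.
-/

universe u

section

open Bornology Filter Module Set Topology

section Convex

variable {E : Type*} [NormedAddCommGroup E] [NormedSpace ℝ E]

theorem subset_closure_interior_of_convex {K : Set E} (hK : Convex ℝ K)
    (hint : (interior K).Nonempty) :
    K ⊆ closure (interior K) :=
  hK.closure_interior_eq_closure_of_nonempty_interior hint ▸ subset_closure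

/-- The recession cone of `K`. The quantifier over `t` makes it closed under nonnegative scaling for
arbitrary `K`, convex or not. -/
def recessionCone (K : Set E) : Set E :=
  {v | ∀ t : ℝ, 0 ≤ t → ∀ x ∈ K, x + t • v ∈ K}

/-- The lineality space of `K`: the directions of the lines along which `K` is translation
invariant. -/
def linealitySpace (K : Set E) : Submodule ℝ E where
  carrier := {v | ∀ c : ℝ, ∀ x ∈ K, x + c • v ∈ K}
  zero_mem' := by simp
  add_mem' {v w} hv hw c x hx := by
    rw [smul_add, ← add_assoc]
    exact hw c _ (hv c x hx)
  smul_mem' s v hv c x hx := by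
    rw [smul_smul]
    exact hv (c * s) x hx

theorem mem_linealitySpace {K : Set E} {v : E} :
    v ∈ linealitySpace K ↔ ∀ c : ℝ, ∀ x ∈ K, x + c • v ∈ K :=
  Iff.rfl

theorem smul_mem_recessionCone {K : Set E} {v : E} (hv : v ∈ recessionCone K) {s : ℝ}
    (hs : 0 ≤ s) : s • v ∈ recessionCone K := fun t ht x hx => by
  rw [smul_smul]
  exact hv (t * s) (mul_nonneg ht hs) x hx

theorem add_mem_interior_of_mem_recessionCone {K : Set E} {x v : E} (hx : x ∈ interior K)
    (hv : v ∈ recessionCone K) : x + v ∈ interior K := by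
  have hsub : interior K + {v} ⊆ interior K := by
    refine interior_maximal ?_ isOpen_interior.add_right
    rintro _ ⟨y, hy, _, rfl, rfl⟩
    simpa using hv 1 zero_le_one y (interior_subset hy)
  exact hsub (add_mem_add hx rfl)

theorem linealitySpace_preimage {F : Type*} [NormedAddCommGroup F] [NormedSpace ℝ F]
    {π : E →L[ℝ] F} (hπ : Function.Surjective π) (K : Set F) :
    linealitySpace (π ⁻¹' K) = (linealitySpace K).comap π.toLinearMap := by
  ext v
  simp only [mem_linealitySpace, Submodule.mem_comap, ContinuousLinearMap.coe_coe, mem_preimage,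
    map_add, map_smul, hπ.forall]

theorem preimage_image_eq_of_ker_le_linealitySpace {F : Type*} [NormedAddCommGroup F]
    [NormedSpace ℝ F] {π : E →L[ℝ] F} {K : Set E} (hπ : π.ker ≤ linealitySpace K) :
    π ⁻¹' (π '' K) = K := by
  refine Subset.antisymm ?_ (subset_preimage_image π K)
  rintro x ⟨y, hy, hyx⟩
  have hker : x - y ∈ π.ker := by simp [hyx]
  simpa using hπ hker 1 y hy

theorem exists_tendsto_inv_norm_smul [FiniteDimensional ℝ E] (l : Filter E) [l.NeBot]
    (hl : ∀ᶠ x in l, x ≠ 0) :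
    ∃ l' ≤ l, l'.NeBot ∧ ∃ v ≠ 0, Tendsto (fun x : E => ‖x‖⁻¹ • x) l' (𝓝 v) := by
  have := FiniteDimensional.proper ℝ E
  have hsphere : ∀ᶠ x in Ultrafilter.of l, ‖x‖⁻¹ • x ∈ Metric.sphere (0 : E) 1 :=
    Ultrafilter.of_le l <| hl.mono fun x hx => by simp [norm_smul, hx]
  obtain ⟨v, hv, hlim⟩ := (isCompact_sphere (0 : E) 1).ultrafilter_le_nhds'
    ((Ultrafilter.of l).map fun x => ‖x‖⁻¹ • x) hsphere
  exact ⟨Ultrafilter.of l, Ultrafilter.of_le l, inferInstance, v,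
    ne_zero_of_mem_unit_sphere ⟨v, hv⟩, hlim⟩

theorem isBounded_of_recessionCone_subset [FiniteDimensional ℝ E] {K : Set E} (hcl : IsClosed K)
    (hconv : Convex ℝ K) (hrec : recessionCone K ⊆ {0}) : IsBounded K := by
  by_contra hunbdd
  have : (cobounded E ⊓ 𝓟 K).NeBot := by
    rwa [neBot_iff, Ne, ← disjoint_iff, disjoint_principal_right, ← isBounded_def]
  obtain ⟨l, hl, _, v, hv0, hv⟩ := exists_tendsto_inv_norm_smul (cobounded E ⊓ 𝓟 K)
    ((eventually_ne_cobounded 0).filter_mono inf_le_left)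
  have hnorm : Tendsto (fun y : E => ‖y‖) l atTop :=
    tendsto_norm_cobounded_atTop.mono_left (hl.trans inf_le_left)
  have hK : ∀ᶠ y in l, y ∈ K := le_principal_iff.1 (hl.trans inf_le_right)
  refine hv0 (hrec fun t ht x hx => ?_)
  have hlim : Tendsto (fun y : E => (1 - t * ‖y‖⁻¹) • x + (t * ‖y‖⁻¹) • y) l (𝓝 (x + t • v)) := by
    have hscale := (hnorm.inv_tendsto_atTop.const_mul t).const_sub 1
    simpa [smul_smul] using (hscale.smul_const x).add (hv.const_smul t)
  refine hcl.mem_of_tendsto hlim ?_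
  filter_upwards [hK, hnorm.eventually_ge_atTop t] with y hy hty
  refine hconv hx hy (sub_nonneg.2 ?_) (by positivity) (by ring)
  exact div_le_one_of_le₀ hty (norm_nonneg y)

end Convex

section Polyhedron

variable {E : Type*} [NormedAddCommGroup E] [NormedSpace ℝ E] {ι : Type*}

/-- The intersection of the closed halfspaces `f i x ≤ b i`. -/
def polyhedron (f : ι → E →L[ℝ] ℝ) (b : ι → ℝ) : Set E :=
  {x | ∀ i, f i x ≤ b i}

theorem polyhedron_eq_iInter (f : ι → E →L[ℝ] ℝ) (b : ι → ℝ) :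
    polyhedron f b = ⋂ i, f i ⁻¹' Iic (b i) := by
  ext
  simp [polyhedron]

theorem isClosed_polyhedron (f : ι → E →L[ℝ] ℝ) (b : ι → ℝ) : IsClosed (polyhedron f b) :=
  polyhedron_eq_iInter f b ▸ isClosed_iInter fun i => isClosed_Iic.preimage (f i).continuous

theorem convex_polyhedron (f : ι → E →L[ℝ] ℝ) (b : ι → ℝ) : Convex ℝ (polyhedron f b) :=
  polyhedron_eq_iInter f b ▸
    convex_iInter fun i => (convex_Iic (b i)).is_linear_preimage (f i).isLinear

theorem polyhedron_mono (f : ι → E →L[ℝ] ℝ) {b c : ι → ℝ} (hbc : b ≤ c) :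
    polyhedron f b ⊆ polyhedron f c :=
  fun _ hx i => (hx i).trans (hbc i)

theorem interior_polyhedron [Finite ι] {f : ι → E →L[ℝ] ℝ} {b : ι → ℝ} {p : E}
    (hp : ∀ i, f i p < b i) : interior (polyhedron f b) = {x | ∀ i, f i x < b i} := by
  have hhalf : ∀ i, interior (f i ⁻¹' Iic (b i)) = f i ⁻¹' Iio (b i) := fun i => by
    rcases eq_or_ne (f i) 0 with h0 | h0
    · have hb : 0 < b i := by simpa [h0] using hp i
      simp [h0, preimage, hb, hb.le]
    · rw [← ((f i).isOpenMap_of_ne_zero h0).preimage_interior_eq_interior_preimage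
        (f i).continuous, interior_Iic]
  rw [polyhedron_eq_iInter, interior_iInter_of_finite]
  ext
  simp [hhalf]

theorem exists_fin_forall_isBounded_polyhedron (E : Type*) [NormedAddCommGroup E]
    [NormedSpace ℝ E] [FiniteDimensional ℝ E] :
    ∃ (n : ℕ) (f : Fin n ⊕ Fin n → E →L[ℝ] ℝ), ∀ b, IsBounded (polyhedron f b) := by
  let e := (finBasis ℝ E).equivFunL
  let coord (i : Fin (finrank ℝ E)) : E →L[ℝ] ℝ :=
    ContinuousLinearMap.proj i ∘L e.toContinuousLinearMap
  refine ⟨_, Sum.elim coord (-coord), fun b => ?_⟩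
  have hbox : IsBounded (e ⁻¹' Icc (fun i => -b (.inr i)) fun i => b (.inl i)) :=
    e.antilipschitz.isBounded_preimage (Metric.isBounded_Icc _ _)
  exact hbox.subset fun x hx => ⟨fun i => neg_le.1 (hx (.inr i)), fun i => hx (.inl i)⟩

theorem exists_forall_lt_of_isBounded (f : ι → E →L[ℝ] ℝ) {K : Set E} (hK : IsBounded K) :
    ∃ b : ι → ℝ, ∀ x ∈ K, ∀ i, f i x < b i := by
  have hbdd : ∀ i, ∃ c, ∀ x ∈ K, f i x < c := fun i => by
    obtain ⟨c, hc⟩ := ((f i).lipschitz.isBounded_image hK).bddAbove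
    exact ⟨c + 1, fun x hx => (hc (mem_image_of_mem _ hx)).trans_lt (lt_add_one c)⟩
  choose b hb using hbdd
  exact ⟨b, fun x hx i => hb i x hx⟩

theorem exists_le_of_notMem_interior_of_convex {K : Set E} (hK : Convex ℝ K)
    (hint : (interior K).Nonempty) {z : E} (hz : z ∉ interior K) :
    ∃ f : E →L[ℝ] ℝ, (∀ x ∈ interior K, f x < f z) ∧ ∀ x ∈ K, f x ≤ f z := by
  obtain ⟨f, hf⟩ := geometric_hahn_banach_open_point hK.interior isOpen_interior hz
  refine ⟨f, hf, fun x hx => ?_⟩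
  exact closure_minimal (fun y hy => (hf y hy).le) (isClosed_Iic.preimage f.continuous)
    (subset_closure_interior_of_convex hK hint hx)

theorem exists_fin_polyhedron_eq [Finite ι] (f : ι → E →L[ℝ] ℝ) (b : ι → ℝ) :
    ∃ (n : ℕ) (g : Fin n → E →L[ℝ] ℝ) (c : Fin n → ℝ), polyhedron f b = polyhedron g c := by
  obtain ⟨n, ⟨e⟩⟩ := Finite.exists_equiv_fin ι
  refine ⟨n, f ∘ e.symm, b ∘ e.symm, ?_⟩
  ext x
  exact e.symm.forall_congr_right.symm

end Polyhedron

section Facet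

variable {E : Type*} [NormedAddCommGroup E] [NormedSpace ℝ E]

theorem mem_intrinsicInterior_iff_mem_nhdsWithin {s : Set E} {x : E} :
    x ∈ intrinsicInterior ℝ s ↔ x ∈ affineSpan ℝ s ∧ s ∈ 𝓝[affineSpan ℝ s] x := by
  simp only [mem_intrinsicInterior]
  constructor
  · rintro ⟨y, hy, rfl⟩
    exact ⟨y.2, preimage_coe_mem_nhds_subtype.1 (mem_interior_iff_mem_nhds.1 hy)⟩
  · rintro ⟨hx, hs⟩
    exact ⟨⟨x, hx⟩, mem_interior_iff_mem_nhds.2 (preimage_coe_mem_nhds_subtype.2 hs), rfl⟩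

theorem exists_mem_openSegment_of_mem_intrinsicInterior {s : Set E} {q x : E}
    (hq : q ∈ intrinsicInterior ℝ s) (hx : x ∈ affineSpan ℝ s) :
    ∃ y ∈ s, q ∈ openSegment ℝ x y := by
  obtain ⟨hqs, hnhds⟩ := mem_intrinsicInterior_iff_mem_nhdsWithin.1 hq
  have hlim : Tendsto (AffineMap.lineMap x q) (𝓝[>] (1 : ℝ)) (𝓝[affineSpan ℝ s] q) := by
    refine tendsto_nhdsWithin_iff.2 ⟨?_, .of_forall fun η => AffineMap.lineMap_mem η hx hqs⟩
    exact (AffineMap.lineMap_continuous.tendsto' 1 q (AffineMap.lineMap_apply_one x q)).mono_left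
      nhdsWithin_le_nhds
  obtain ⟨η, hη, hη1 : 1 < η⟩ := ((hlim.eventually hnhds).and self_mem_nhdsWithin).exists
  have hη0 : 0 < η := one_pos.trans hη1
  refine ⟨_, hη, 1 - η⁻¹, η⁻¹, sub_pos.2 (inv_lt_one_of_one_lt₀ hη1), inv_pos.2 hη0, by ring, ?_⟩
  rw [AffineMap.lineMap_apply_module', smul_add, smul_smul, inv_mul_cancel₀ hη0.ne']
  module

theorem mem_of_isExtreme_of_mem_intrinsicInterior {K F s : Set E} (hF : IsExtreme ℝ K F)
    (hs : s ⊆ K) {q x : E} (hqF : q ∈ F) (hq : q ∈ intrinsicInterior ℝ s) (hxK : x ∈ K)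
    (hx : x ∈ affineSpan ℝ s) : x ∈ F := by
  obtain ⟨y, hy, hqy⟩ := exists_mem_openSegment_of_mem_intrinsicInterior hq hx
  exact hF.left_mem_of_mem_openSegment hxK (hs hy) hqF hqy

theorem le_of_mem_intrinsicInterior_of_forall_le {s : Set E} {q : E}
    (hq : q ∈ intrinsicInterior ℝ s) {f : E →L[ℝ] ℝ} (hf : ∀ x ∈ s, f x ≤ f q) {x : E}
    (hx : x ∈ affineSpan ℝ s) : f q ≤ f x := by
  obtain ⟨y, hy, a, b, ha, hb, hab, hxy⟩ := exists_mem_openSegment_of_mem_intrinsicInterior hq hx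
  have hsplit : f q = a * f x + b * f y := by simp [← hxy]
  have hweights : a * f q + b * f q = f q := by rw [← add_mul, hab, one_mul]
  have hfy := mul_le_mul_of_nonneg_left (hf y hy) hb.le
  exact le_of_mul_le_mul_left (by linarith) ha

theorem eq_of_mem_intrinsicInterior_of_forall_le {s : Set E} {q : E}
    (hq : q ∈ intrinsicInterior ℝ s) {f : E →L[ℝ] ℝ} (hf : ∀ x ∈ s, f x ≤ f q) {x : E}
    (hx : x ∈ affineSpan ℝ s) : f x = f q := by
  have hqs : q ∈ affineSpan ℝ s := subset_affineSpan ℝ s (intrinsicInterior_subset hq)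
  have hrefl := le_of_mem_intrinsicInterior_of_forall_le hq hf (AffineMap.lineMap_mem 2 hx hqs)
  rw [AffineMap.lineMap_apply_module', map_add, map_smul, map_sub, smul_eq_mul] at hrefl
  linarith [le_of_mem_intrinsicInterior_of_forall_le hq hf hx]

/-- `F` is a facet of `K`: a nonempty convex extreme subset of codimension one. This is `IsFacet` in
an arbitrary space. -/
def IsFacetOf (K F : Set E) : Prop :=
  F.Nonempty ∧ IsExtreme ℝ K F ∧ Convex ℝ F ∧
    finrank ℝ (affineSpan ℝ F).direction + 1 = finrank ℝ E

theorem notMem_interior_of_isFacetOf {K F : Set E} (hF : IsFacetOf K F) {q : E} (hq : q ∈ F) :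
    q ∉ interior K := fun hqK => by
  have hKF : K ⊆ F := fun x hx =>
    mem_of_isExtreme_of_mem_intrinsicInterior hF.2.1 subset_rfl hq
      (interior_subset_intrinsicInterior hqK) hx (subset_affineSpan ℝ K hx)
  have htop : affineSpan ℝ F = ⊤ := by
    refine top_le_iff.1 ?_
    rw [← isOpen_interior.affineSpan_eq_top ⟨q, hqK⟩]
    exact affineSpan_mono ℝ (interior_subset.trans hKF)
  have hrank := hF.2.2.2
  rw [htop, AffineSubspace.direction_top, finrank_top] at hrank
  omega

theorem mem_affineSpan_of_isFacetOf [FiniteDimensional ℝ E] {K F : Set E} (hF : IsFacetOf K F)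
    {f : E →L[ℝ] ℝ} (hf : f ≠ 0) {c : ℝ} (hfc : ∀ x ∈ F, f x = c) {x : E} (hx : f x = c) :
    x ∈ affineSpan ℝ F := by
  obtain ⟨y, hy⟩ := hF.1
  have hle : (affineSpan ℝ F).direction ≤ f.ker := by
    rw [direction_affineSpan, vectorSpan_def, Submodule.span_le]
    rintro _ ⟨x, hx, y, hy, rfl⟩
    simp [hfc x hx, hfc y hy]
  have hker : (affineSpan ℝ F).direction = f.ker := by
    refine Submodule.eq_of_le_of_finrank_eq hle (Nat.succ_injective ?_)
    rw [Nat.succ_eq_add_one, hF.2.2.2]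
    exact (Module.Dual.finrank_ker_add_one_of_ne_zero (f := f.toLinearMap) <|
      ContinuousLinearMap.coe_injective.ne hf).symm
  have hxy : x -ᵥ y ∈ (affineSpan ℝ F).direction := by simp [hker, hx, hfc y hy]
  simpa using AffineSubspace.vadd_mem_of_mem_direction hxy (subset_affineSpan ℝ F hy)

theorem mem_intrinsicInterior_of_isFacetOf_polyhedron [FiniteDimensional ℝ E] {ι : Type*}
    [Finite ι] {f : ι → E →L[ℝ] ℝ} {b : ι → ℝ} {p q z : E} {F : Set E}
    (hp : ∀ i, f i p < b i) (hF : IsFacetOf (polyhedron f b) F) (hq : q ∈ intrinsicInterior ℝ F)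
    (hz : z ∈ polyhedron f b) (hzint : z ∉ interior (polyhedron f b))
    (hzq : ∀ i, f i q < b i → f i z < b i) : z ∈ intrinsicInterior ℝ F := by
  have hqF : q ∈ F := intrinsicInterior_subset hq
  have hFK : F ⊆ polyhedron f b := hF.2.1.subset
  have htight : ∀ i, ¬ f i q < b i → ∀ x ∈ affineSpan ℝ F, f i x = b i := fun i hi x hx => by
    have hqi : f i q = b i := (hFK hqF i).antisymm (not_lt.1 hi)
    rw [← hqi]
    exact eq_of_mem_intrinsicInterior_of_forall_le hq (fun y hy => hqi ▸ hFK hy i) hx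
  obtain ⟨j, hj⟩ : ∃ j, b j ≤ f j z := by
    simpa [interior_polyhedron hp] using hzint
  have hfj : f j ≠ 0 := fun h0 => (hp j).not_ge (by simpa [h0] using hj)
  have hzF : z ∈ affineSpan ℝ F := by
    refine mem_affineSpan_of_isFacetOf hF hfj (fun x hx => ?_) ((hz j).antisymm hj)
    exact htight j (fun hqj => (hzq j hqj).not_ge hj) x (subset_affineSpan ℝ F hx)
  have hnear : ∀ᶠ x in 𝓝 z, ∀ i, f i q < b i → f i x < b i := by
    refine eventually_all.2 fun i => ?_
    by_cases hi : f i q < b i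
    · filter_upwards [(f i).continuous.continuousAt.eventually_lt_const (hzq i hi)] with x hx _
      exact hx
    · exact .of_forall fun _ h => absurd h hi
  refine mem_intrinsicInterior_iff_mem_nhdsWithin.2 ⟨hzF, ?_⟩
  filter_upwards [mem_nhdsWithin_of_mem_nhds hnear, self_mem_nhdsWithin] with x hx hxF
  refine mem_of_isExtreme_of_mem_intrinsicInterior hF.2.1 hFK hqF hq (fun i => ?_) hxF
  by_cases hi : f i q < b i
  · exact (hx i hi).le
  · exact (htight i hi x hxF).le

end Facet

section AddSubgroup

variable {E : Type*} [NormedAddCommGroup E] [NormedSpace ℝ E]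

theorem tendsto_floor_div_mul_nhdsGT_zero (c : ℝ) :
    Tendsto (fun r : ℝ => (⌊c / r⌋ : ℝ) * r) (𝓝[>] 0) (𝓝 c) := by
  have hlower : Tendsto (fun r : ℝ => c - r) (𝓝[>] 0) (𝓝 c) :=
    ((continuous_const.sub continuous_id).tendsto' 0 c (sub_zero c)).mono_left nhdsWithin_le_nhds
  refine tendsto_of_tendsto_of_tendsto_of_le_of_le' hlower tendsto_const_nhds ?_ ?_
  all_goals filter_upwards [self_mem_nhdsWithin] with r hr
  · rw [sub_le_iff_le_add, ← add_one_mul, ← div_le_iff₀ hr]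
    exact (Int.lt_floor_add_one _).le
  · exact (le_div_iff₀ hr).1 (Int.floor_le _)

theorem exists_smul_mem_closure_of_not_discreteTopology [FiniteDimensional ℝ E]
    {Λ : AddSubgroup E} (hΛ : ¬ DiscreteTopology Λ) :
    ∃ v : E, v ≠ 0 ∧ ∀ c : ℝ, c • v ∈ closure (Λ : Set E) := by
  have : (𝓝[≠] (0 : E) ⊓ 𝓟 (Λ : Set E)).NeBot := by
    rwa [discreteTopology_iff_isOpen_singleton_zero, isOpen_singleton_iff_punctured_nhds,
      nhds_ne_subtype_eq_bot_iff, ← Ne, ← neBot_iff] at hΛ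
  have hne0 : ∀ᶠ x in 𝓝[≠] (0 : E) ⊓ 𝓟 (Λ : Set E), x ≠ 0 :=
    eventually_mem_nhdsWithin.filter_mono inf_le_left
  obtain ⟨l, hl, _, v, hv0, hv⟩ := exists_tendsto_inv_norm_smul _ hne0
  have hne : ∀ᶠ x in l, x ≠ 0 := hne0.filter_mono hl
  have hmem : ∀ᶠ x in l, x ∈ Λ := le_principal_iff.1 (hl.trans inf_le_right)
  have hnorm : Tendsto (fun x : E => ‖x‖) l (𝓝[>] 0) :=
    tendsto_norm_nhdsNE_zero.mono_left (hl.trans inf_le_left)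
  refine ⟨v, hv0, fun c => ?_⟩
  have hlim : Tendsto (fun x : E => ⌊c / ‖x‖⌋ • x) l (𝓝 (c • v)) := by
    refine (((tendsto_floor_div_mul_nhdsGT_zero c).comp hnorm).smul hv).congr' ?_
    filter_upwards [hne] with x hx
    rw [Function.comp, smul_smul, mul_assoc, mul_inv_cancel₀ (norm_ne_zero_iff.2 hx), mul_one,
      Int.cast_smul_eq_zsmul]
  exact mem_closure_of_tendsto hlim (hmem.mono fun x hx => Λ.zsmul_mem hx _)

-- Dirichlet: two multiples of `|M| • v` have nearby fractional parts modulo a lattice inside `Λ`.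
theorem exists_mem_norm_sub_smul_lt [FiniteDimensional ℝ E] {Λ : AddSubgroup E}
    (hΛ : Submodule.span ℝ (Λ : Set E) = ⊤) (v : E) (M : ℝ) {δ : ℝ} (hδ : 0 < δ) :
    ∃ u ∈ Λ, ∃ t ≥ M, ‖u - t • v‖ < δ := by
  have := FiniteDimensional.proper ℝ E
  let b := Basis.ofSpan hΛ.ge
  have : Fintype _ := FiniteDimensional.fintypeBasisIndex b
  have hb : Submodule.span ℤ (range b) ≤ Λ.toIntSubmodule :=
    Submodule.span_le.2 (Basis.ofSpan_subset hΛ.ge)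
  let r : ℕ → E := fun n => ZSpan.fract b ((n * |M|) • v)
  have hr : ∀ n, r n ∈ Metric.closedBall 0 (∑ i, ‖b i‖) := fun n =>
    mem_closedBall_zero_iff.2 (ZSpan.norm_fract_le b _)
  obtain ⟨w, -, φ, hφ, hlim⟩ := (isCompact_closedBall _ _).tendsto_subseq hr
  obtain ⟨N, hN⟩ := Metric.cauchySeq_iff.1 hlim.cauchySeq δ hδ
  have hclose := hN N le_rfl (N + 1) N.le_succ
  let z : ℕ → Submodule.span ℤ (range b) := fun n => ZSpan.floor b ((φ n * |M|) • v)
  refine ⟨_, Λ.sub_mem (hb (z (N + 1)).2) (hb (z N).2), ((φ (N + 1) : ℝ) - φ N) * |M|, ?_, ?_⟩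
  · have hgap : (φ N : ℝ) + 1 ≤ φ (N + 1) := by exact_mod_cast hφ N.lt_succ_self
    nlinarith [le_abs_self M, abs_nonneg M]
  · rw [dist_eq_norm] at hclose
    refine lt_of_eq_of_lt (congrArg norm ?_) hclose
    simp only [r, z, Function.comp, ZSpan.fract_apply, sub_mul, sub_smul]
    abel

end AddSubgroup

section FreeConvex

variable {E : Type*} [NormedAddCommGroup E] [NormedSpace ℝ E]

/-- `K` is a closed convex `S`-free set: no point of `S` lies in its interior. This is
`IsLatticeFree` for an arbitrary set `S` of forbidden points in an arbitrary space. -/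
def IsFreeConvex (S K : Set E) : Prop :=
  IsClosed K ∧ Convex ℝ K ∧ interior K ∩ S = ∅

theorem isFreeConvex_closure_interior_add_span {Λ : AddSubgroup E} {K : Set E} {v : E}
    (hK : IsFreeConvex (Λ : Set E) K) (hint : (interior K).Nonempty)
    (hv : ∀ c : ℝ, c • v ∈ closure ((Λ : Set E) - recessionCone K)) :
    IsFreeConvex (Λ : Set E) (closure (interior K + (ℝ ∙ v : Set E))) := by
  obtain ⟨-, hconv, hfree⟩ := hK
  have hUconv : Convex ℝ (interior K + (ℝ ∙ v : Set E)) :=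
    hconv.interior.add (Submodule.convex _)
  have hUint : interior (interior K + (ℝ ∙ v : Set E)) = interior K + (ℝ ∙ v : Set E) :=
    isOpen_interior.add_right.interior_eq
  refine ⟨isClosed_closure, hUconv.closure, ?_⟩
  rw [hUconv.interior_closure_eq_interior_of_nonempty_interior
    (hUint.symm ▸ hint.add ⟨0, zero_mem _⟩), hUint, eq_empty_iff_forall_notMem]
  rintro _ ⟨⟨x, hx, w, hw, rfl⟩, hz⟩
  obtain ⟨c, rfl⟩ := Submodule.mem_span_singleton.1 hw
  have hnhds : ∀ᶠ y in 𝓝 (-c • v), x + c • v + y ∈ interior K :=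
    (continuous_const_add (x + c • v)).continuousAt.eventually_mem
      (isOpen_interior.mem_nhds (by simpa using hx))
  obtain ⟨_, hy, u, hu, r, hr, rfl⟩ := mem_closure_iff_nhds.1 (hv (-c)) _ hnhds
  refine eq_empty_iff_forall_notMem.1 hfree (x + c • v + u) ⟨?_, Λ.add_mem hz hu⟩
  simpa [add_assoc] using add_mem_interior_of_mem_recessionCone hy hr

theorem mem_linealitySpace_of_forall_smul_mem_closure {Λ : AddSubgroup E} {K : Set E} {v : E}
    (hK : Maximal (IsFreeConvex (Λ : Set E)) K) (hint : (interior K).Nonempty)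
    (hv : ∀ c : ℝ, c • v ∈ closure ((Λ : Set E) - recessionCone K)) : v ∈ linealitySpace K := by
  have hKU : K ⊆ closure (interior K + (ℝ ∙ v : Set E)) :=
    (subset_closure_interior_of_convex hK.1.2.1 hint).trans <|
      closure_mono fun x hx => ⟨x, hx, 0, zero_mem _, add_zero x⟩
  have hUK := hK.2 (isFreeConvex_closure_interior_add_span hK.1 hint hv) hKU
  refine fun c x hx => hUK <|
    map_mem_closure (f := fun y => y + c • v) (continuous_add_const _) (hKU hx) ?_
  rintro _ ⟨y, hy, w, hw, rfl⟩
  have hcv : c • v ∈ ℝ ∙ v := Submodule.smul_mem _ c (Submodule.mem_span_singleton_self v)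
  exact ⟨y, hy, w + c • v, add_mem hw hcv, (add_assoc _ _ _).symm⟩

variable [FiniteDimensional ℝ E]

theorem smul_mem_closure_sub_recessionCone {Λ : AddSubgroup E}
    (hΛ : Submodule.span ℝ (Λ : Set E) = ⊤) {K : Set E} {v : E} (hv : v ∈ recessionCone K)
    (c : ℝ) : c • v ∈ closure ((Λ : Set E) - recessionCone K) := by
  refine Metric.mem_closure_iff.2 fun ε hε => ?_
  obtain ⟨u, hu, t, ht, hut⟩ := exists_mem_norm_sub_smul_lt hΛ v c hε
  refine ⟨_, sub_mem_sub hu (smul_mem_recessionCone hv (sub_nonneg.2 ht)), ?_⟩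
  rwa [dist_comm, dist_eq_norm, sub_smul, sub_sub, sub_add_cancel]

theorem isBounded_and_discreteTopology_of_linealitySpace_eq_bot {Λ : AddSubgroup E}
    (hΛ : Submodule.span ℝ (Λ : Set E) = ⊤) {K : Set E}
    (hK : Maximal (IsFreeConvex (Λ : Set E)) K) (hint : (interior K).Nonempty)
    (hlin : linealitySpace K = ⊥) : IsBounded K ∧ DiscreteTopology Λ := by
  refine ⟨isBounded_of_recessionCone_subset hK.1.1 hK.1.2.1 fun v hv => ?_, ?_⟩
  · have := mem_linealitySpace_of_forall_smul_mem_closure hK hint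
      (smul_mem_closure_sub_recessionCone hΛ hv)
    rwa [hlin] at this
  · by_contra hdisc
    obtain ⟨v, hv0, hv⟩ := exists_smul_mem_closure_of_not_discreteTopology hdisc
    have hzero : (0 : E) ∈ recessionCone K := by simp [recessionCone]
    have hsub : (Λ : Set E) ⊆ (Λ : Set E) - recessionCone K := fun u hu =>
      ⟨u, hu, 0, hzero, sub_zero u⟩
    have := mem_linealitySpace_of_forall_smul_mem_closure hK hint fun c => closure_mono hsub (hv c)
    rw [hlin] at this
    exact hv0 this

variable {F : Type*} [NormedAddCommGroup F] [NormedSpace ℝ F] [FiniteDimensional ℝ F]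

theorem isFreeConvex_preimage_iff {π : E →L[ℝ] F} (hπ : Function.Surjective π) {S : Set E}
    {K : Set F} : IsFreeConvex S (π ⁻¹' K) ↔ IsFreeConvex (π '' S) K := by
  have := FiniteDimensional.complete ℝ E
  have := FiniteDimensional.complete ℝ F
  have hconv : Convex ℝ (π ⁻¹' K) ↔ Convex ℝ K :=
    ⟨fun h => image_preimage_eq K hπ ▸ h.is_linear_image π.isLinear,
      fun h => h.is_linear_preimage π.isLinear⟩
  rw [IsFreeConvex, IsFreeConvex, (π.isQuotientMap hπ).isClosed_preimage, hconv,
    π.interior_preimage hπ, ← image_eq_empty (f := π), inter_comm, image_inter_preimage,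
    inter_comm]

theorem maximal_isFreeConvex_of_preimage {π : E →L[ℝ] F} (hπ : Function.Surjective π) {S : Set E}
    {K : Set F} (hK : Maximal (IsFreeConvex S) (π ⁻¹' K)) :
    Maximal (IsFreeConvex (π '' S)) K :=
  ⟨(isFreeConvex_preimage_iff hπ).1 hK.1, fun _ hfree hle =>
    (preimage_subset_preimage_iff (hπ.range_eq ▸ subset_univ _)).1 <|
      hK.2 ((isFreeConvex_preimage_iff hπ).2 hfree) (preimage_mono hle)⟩

end FreeConvex

section MaximalFree

theorem exists_pos_forall_le_of_forall_lt_add {ι : Type*} {V : Set (ι → ℝ)} (hV : V.Finite)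
    (b : ι → ℝ) : ∃ ε : ℝ, 0 < ε ∧ ε ≤ 1 ∧ ∀ v ∈ V, (∀ i, v i < b i + ε) → v ≤ b := by
  have hgap : ∀ᶠ ε in 𝓝[>] (0 : ℝ), ∀ v ∈ V, (∀ i, v i < b i + ε) → v ≤ b := by
    refine (eventually_all_finite hV).2 fun v _ => ?_
    by_cases hv : v ≤ b
    · exact .of_forall fun _ _ => hv
    · obtain ⟨i, hi⟩ : ∃ i, b i < v i := by simpa [Pi.le_def] using hv
      filter_upwards [Ioo_mem_nhdsGT (sub_pos.2 hi)] with ε hε hlt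
      linarith [hlt i, hε.2]
  obtain ⟨ε, hε, hε0, hε1⟩ := (hgap.and (Ioc_mem_nhdsGT one_pos)).exists
  exact ⟨ε, hε0, hε1, hε⟩

variable {E : Type u} [NormedAddCommGroup E] [NormedSpace ℝ E]

theorem exists_mem_forall_lt_of_notMem_interior {ι : Type*} [Finite ι] {S : Set E}
    {f : ι → E →L[ℝ] ℝ} {b : ι → ℝ} {p q : E} (hK : Maximal (IsFreeConvex S) (polyhedron f b))
    (hp : ∀ i, f i p < b i)
    (hS : ((fun z i => f i z) '' (S ∩ polyhedron f (b + 1))).Finite)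
    (hqK : q ∈ polyhedron f b) (hq : q ∉ interior (polyhedron f b)) :
    ∃ z ∈ S ∩ polyhedron f b, z ∉ interior (polyhedron f b) ∧
      ∀ i, f i q < b i → f i z < b i := by
  classical
  obtain ⟨ε, hε0, hε1, hε⟩ := exists_pos_forall_le_of_forall_lt_add hS b
  let c : ι → ℝ := fun i => if f i q < b i then b i else b i + ε
  have hbc : b ≤ c := fun i => by dsimp only [c]; split_ifs <;> linarith
  have hcb : ∀ i, c i ≤ b i + ε := fun i => by dsimp only [c]; split_ifs <;> linarith
  have hint : interior (polyhedron f c) = {x | ∀ i, f i x < c i} :=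
    interior_polyhedron fun i => (hp i).trans_le (hbc i)
  have hqc : q ∈ interior (polyhedron f c) := by
    rw [hint]
    intro i
    dsimp only [c]
    split_ifs with h
    · exact h
    · linarith [hqK i]
  have hnot : ¬ IsFreeConvex S (polyhedron f c) := fun hfree =>
    hq (interior_mono (hK.2 hfree (polyhedron_mono f hbc)) hqc)
  obtain ⟨z, hz, hzS⟩ : (interior (polyhedron f c) ∩ S).Nonempty := by
    refine nonempty_iff_ne_empty.2 fun hempty => ?_
    exact hnot ⟨isClosed_polyhedron f c, convex_polyhedron f c, hempty⟩
  rw [hint] at hz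
  have hzε : ∀ i, f i z < b i + ε := fun i => (hz i).trans_le (hcb i)
  have hz1 : z ∈ polyhedron f (b + 1) := fun i => (hzε i).le.trans (by simpa using hε1)
  refine ⟨z, ⟨hzS, hε _ ⟨z, ⟨hzS, hz1⟩, rfl⟩ hzε⟩, fun hzint => ?_, fun i hi => ?_⟩
  · exact eq_empty_iff_forall_notMem.1 hK.1.2.2 z ⟨hzint, hzS⟩
  · simpa only [c, if_pos hi] using hz i

variable [FiniteDimensional ℝ E]

-- The last conjunct leaves a gap above each `b i`, so that facets can be pushed outwards slightly
-- without reaching points of `S` outside `K`.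
theorem exists_polyhedron_of_isBounded {S K : Set E} (hS : ∀ B, IsBounded B → (S ∩ B).Finite)
    (hK : Maximal (IsFreeConvex S) K) (hint : (interior K).Nonempty) (hbdd : IsBounded K) :
    ∃ (ι : Type u) (_ : Finite ι) (f : ι → E →L[ℝ] ℝ) (b : ι → ℝ), K = polyhedron f b ∧
      (∃ p, ∀ i, f i p < b i) ∧ (S ∩ polyhedron f (b + 1)).Finite := by
  obtain ⟨p, hp⟩ := hint
  obtain ⟨n, f, hf⟩ := exists_fin_forall_isBounded_polyhedron E
  obtain ⟨b, hb⟩ := exists_forall_lt_of_isBounded f hbdd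
  let T := S ∩ polyhedron f b
  have : Finite T := (hS _ (hf b)).to_subtype
  have hsep : ∀ z : T, ∃ g : E →L[ℝ] ℝ, (∀ x ∈ interior K, g x < g z) ∧ ∀ x ∈ K, g x ≤ g z :=
    fun z => exists_le_of_notMem_interior_of_convex hK.1.2.1 ⟨p, hp⟩ fun hz =>
      eq_empty_iff_forall_notMem.1 hK.1.2.2 z ⟨hz, z.2.1⟩
  choose g hgint hg using hsep
  let f' : (Fin n ⊕ Fin n) ⊕ T → E →L[ℝ] ℝ := Sum.elim f g
  let b' : (Fin n ⊕ Fin n) ⊕ T → ℝ := Sum.elim b fun z => g z z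
  have hslater : ∀ i, f' i p < b' i :=
    Sum.forall.2 ⟨hb p (interior_subset hp), fun z => hgint z p hp⟩
  have hsub : K ⊆ polyhedron f' b' := fun x hx =>
    Sum.forall.2 ⟨fun i => (hb x hx i).le, fun z => hg z x hx⟩
  have hfree : IsFreeConvex S (polyhedron f' b') := by
    refine ⟨isClosed_polyhedron _ _, convex_polyhedron _ _, eq_empty_iff_forall_notMem.2 ?_⟩
    rintro z ⟨hz, hzS⟩
    rw [interior_polyhedron hslater] at hz
    exact lt_irrefl _ (hz (.inr ⟨z, hzS, fun i => (hz (.inl i)).le⟩))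
  refine ⟨_, inferInstance, f', b', hK.eq_of_subset hfree hsub, ⟨p, hslater⟩, ?_⟩
  exact hS _ ((hf (b + 1)).subset fun x hx i => hx (.inl i))

theorem exists_polyhedron_eq_preimage {F : Type u} [NormedAddCommGroup F] [NormedSpace ℝ F]
    [FiniteDimensional ℝ F] {π : E →L[ℝ] F} (hπ : Function.Surjective π) {Λ : AddSubgroup E}
    (hΛ : Submodule.span ℝ (Λ : Set E) = ⊤) {K : Set F}
    (hK : Maximal (IsFreeConvex (Λ : Set E)) (π ⁻¹' K)) (hint : (interior (π ⁻¹' K)).Nonempty)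
    (hlin : linealitySpace K = ⊥) :
    ∃ (ι : Type u) (_ : Finite ι) (f : ι → E →L[ℝ] ℝ) (b : ι → ℝ), π ⁻¹' K = polyhedron f b ∧
      (∃ p, ∀ i, f i p < b i) ∧
        ((fun z i => f i z) '' ((Λ : Set E) ∩ polyhedron f (b + 1))).Finite := by
  let Λ' : AddSubgroup F := Λ.map (π : E →+ F)
  have hΛ' : Submodule.span ℝ (Λ' : Set F) = ⊤ := by
    have := Submodule.map_span π.toLinearMap (Λ : Set E)
    rw [hΛ, Submodule.map_top, LinearMap.range_eq_top.2 hπ] at this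
    exact this.symm
  have hK' : Maximal (IsFreeConvex (Λ' : Set F)) K := maximal_isFreeConvex_of_preimage hπ hK
  have hint' : (interior K).Nonempty := by
    have := FiniteDimensional.complete ℝ E
    have := FiniteDimensional.complete ℝ F
    rw [π.interior_preimage hπ] at hint
    exact hπ.nonempty_preimage.1 hint
  obtain ⟨hbdd, hdisc⟩ :=
    isBounded_and_discreteTopology_of_linealitySpace_eq_bot hΛ' hK' hint' hlin
  have := FiniteDimensional.proper ℝ F
  have hfin : ∀ B, IsBounded B → ((Λ' : Set F) ∩ B).Finite := fun B hB => by
    rw [inter_comm]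
    exact Metric.finite_isBounded_inter_isClosed DiscreteTopology.isDiscrete hB
      AddSubgroup.isClosed_of_discrete
  obtain ⟨ι, _, f, b, rfl, ⟨p, hp⟩, hgap⟩ := exists_polyhedron_of_isBounded hfin hK' hint' hbdd
  obtain ⟨p, rfl⟩ := hπ p
  refine ⟨ι, inferInstance, fun i => f i ∘L π, b, rfl, ⟨p, hp⟩, ?_⟩
  refine (hgap.image fun y i => f i y).subset ?_
  rintro _ ⟨z, ⟨hz, hzP⟩, rfl⟩
  exact ⟨π z, ⟨mem_image_of_mem _ hz, hzP⟩, rfl⟩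

theorem exists_polyhedron_of_maximal_isFreeConvex {Λ : AddSubgroup E}
    (hΛ : Submodule.span ℝ (Λ : Set E) = ⊤) {K : Set E}
    (hK : Maximal (IsFreeConvex (Λ : Set E)) K) (hint : (interior K).Nonempty) :
    ∃ (ι : Type u) (_ : Finite ι) (f : ι → E →L[ℝ] ℝ) (b : ι → ℝ), K = polyhedron f b ∧
      (∃ p, ∀ i, f i p < b i) ∧
        ((fun z i => f i z) '' ((Λ : Set E) ∩ polyhedron f (b + 1))).Finite := by
  have : IsClosed (linealitySpace K : Set E) := Submodule.closed_of_finiteDimensional _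
  let π : E →L[ℝ] E ⧸ linealitySpace K := (linealitySpace K).mkQL
  have hπ : Function.Surjective π := Submodule.mkQ_surjective _
  have hker : π.ker = linealitySpace K := Submodule.ker_mkQ _
  have hKπ : π ⁻¹' (π '' K) = K := preimage_image_eq_of_ker_le_linealitySpace hker.le
  have hlin : linealitySpace (π '' K) = ⊥ := by
    refine Submodule.comap_injective_of_surjective hπ ?_
    rw [← linealitySpace_preimage hπ, Submodule.comap_bot]
    exact (congrArg linealitySpace hKπ).trans hker.symm
  have h := exists_polyhedron_eq_preimage hπ hΛ (hKπ.symm ▸ hK) (hKπ.symm ▸ hint) hlin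
  rwa [hKπ] at h

end MaximalFree

theorem stmt_2_general {E : Type*} [NormedAddCommGroup E] [NormedSpace ℝ E]
    [FiniteDimensional ℝ E] {Λ : AddSubgroup E} (hΛ : Submodule.span ℝ (Λ : Set E) = ⊤) {K : Set E}
    (hK : Maximal (IsFreeConvex (Λ : Set E)) K) (hdim : affineSpan ℝ K = ⊤) :
    (∃ (n : ℕ) (f : Fin n → E →L[ℝ] ℝ) (b : Fin n → ℝ), K = polyhedron f b) ∧
      ∀ F : Set E, IsFacetOf K F → (intrinsicInterior ℝ F ∩ Λ).Nonempty := by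
  have hint := hK.1.2.1.interior_nonempty_iff_affineSpan_eq_top.2 hdim
  obtain ⟨ι, _, f, b, rfl, ⟨p, hp⟩, hfin⟩ := exists_polyhedron_of_maximal_isFreeConvex hΛ hK hint
  refine ⟨exists_fin_polyhedron_eq f b, fun F hF => ?_⟩
  obtain ⟨q, hq⟩ := hF.1.intrinsicInterior hF.2.2.1
  have hqF : q ∈ F := intrinsicInterior_subset hq
  obtain ⟨z, ⟨hzΛ, hzK⟩, hzint, hzq⟩ := exists_mem_forall_lt_of_notMem_interior hK hp hfin
    (hF.2.1.subset hqF) (notMem_interior_of_isFacetOf hF hqF)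
  exact ⟨z, mem_intrinsicInterior_of_isFacetOf_polyhedron hp hF hq hzK hzint hzq, hzΛ⟩

section IntegerLattice

/-- The integer lattice as a subgroup; its carrier is `intLattice d` definitionally. -/
def intLatticeSubgroup (d : ℕ) : AddSubgroup (Fin d → ℝ) :=
  ((Int.castAddHom ℝ).compLeft (Fin d)).range

theorem span_intLattice (d : ℕ) : Submodule.span ℝ (intLattice d) = ⊤ := by
  rw [← top_le_iff, ← (Pi.basisFun ℝ (Fin d)).span_eq]
  refine Submodule.span_mono ?_
  rintro _ ⟨i, rfl⟩
  refine ⟨Pi.single i 1, funext fun j => ?_⟩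
  simp [Pi.single_apply]

theorem isMaxLatticeFree_iff_maximal {d : ℕ} {K : Set (Fin d → ℝ)} :
    IsMaxLatticeFree d K ↔ Maximal (IsFreeConvex (intLattice d)) K :=
  ⟨fun hK => ⟨hK.1, fun _ hfree hle => (hK.2 _ hfree hle).le⟩,
    fun hK => ⟨hK.1, fun _ hfree hle => (hK.eq_of_subset hfree hle).symm⟩⟩

theorem isFacet_iff_isFacetOf {d : ℕ} {K F : Set (Fin d → ℝ)} :
    IsFacet d K F ↔ IsFacetOf K F := by
  rw [IsFacet, IsFacetOf, finrank_fin_fun]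

theorem isPolyhedron_polyhedron {d n : ℕ} (f : Fin n → (Fin d → ℝ) →L[ℝ] ℝ) (b : Fin n → ℝ) :
    IsPolyhedron d (polyhedron f b) := by
  refine ⟨n, fun i j => f i (Pi.single j 1), b, ?_⟩
  have hcoord : ∀ i x, ∑ j, f i (Pi.single j 1) * x j = f i x := fun i x => by
    conv_rhs => rw [← (Pi.basisFun ℝ (Fin d)).sum_repr x]
    simp [mul_comm]
  simp only [hcoord]
  rfl

end IntegerLattice

end

/-- A `d`-dimensional maximal lattice-free set in `ℝ^d` is a
polyhedron, and the relative interior of each of its facets contains an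
integer point. -/
theorem stmt_2 (d : ℕ) (K : Set (Fin d → ℝ))
    (hK : IsMaxLatticeFree d K) (hdim : affineSpan ℝ K = ⊤) :
    IsPolyhedron d K ∧
      ∀ F : Set (Fin d → ℝ), IsFacet d K F →
        (intrinsicInterior ℝ F ∩ intLattice d).Nonempty := by
  obtain ⟨⟨n, f, b, rfl⟩, hfacet⟩ := stmt_2_general (Λ := intLatticeSubgroup d)
    (span_intLattice d) (isMaxLatticeFree_iff_maximal.1 hK) hdim
  exact ⟨isPolyhedron_polyhedron f b, fun F hF => hfacet F (isFacet_iff_isFacetOf.1 hF)⟩
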